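/- Let A be a Marot ISP-ring and let I be a proper invertible radical ideal of A. Then I is zero-dimensional, i.e., every prime ideal of A containing I is a maximal ideal (equivalently, the quotient ring A/I is zero-dimensional). -/

import Mathlib

/-- An ideal is *regular* if it contains a regular element (a non-zero-divisor). -/
def Ideal.IsRegularIdeal {A : Type*} [CommRing A] (I : Ideal A) : Prop :=
  ∃ a ∈ I, a ∈ nonZeroDivisors A

/-- An ideal is *invertible* if it is regular, finitely generated and locally principal. -/
def Ideal.IsInvertibleIdeal {A : Type*} [CommRing A] (J : Ideal A) : Prop :=
  J.IsRegularIdeal ∧ J.FG ∧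
    ∀ M : Ideal A, ∀ hM : M.IsMaximal,
      haveI := hM.isPrime
      (J.map (algebraMap A (Localization.AtPrime M))).IsPrincipal

/-- `I` can be written as an invertible ideal times a nonempty product of
proper radical ideals. -/
def Ideal.HasISPFactorization {A : Type*} [CommRing A] (I : Ideal A) : Prop :=
  ∃ (J : Ideal A) (L : List (Ideal A)), J.IsInvertibleIdeal ∧ L ≠ [] ∧
    (∀ H ∈ L, H ≠ ⊤ ∧ H.IsRadical) ∧ I = J * L.prod

/-- An ISP-ring: every proper regular ideal factors as an invertible ideal times a
nonempty product of proper radical ideals. -/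
def IsISPRing (A : Type*) [CommRing A] : Prop :=
  ∀ I : Ideal A, I ≠ ⊤ → I.IsRegularIdeal → I.HasISPFactorization

/-- A strongly ISP-ring: every proper ideal factors as an invertible ideal times a
nonempty product of proper radical ideals. -/
def IsStronglyISPRing (A : Type*) [CommRing A] : Prop :=
  ∀ I : Ideal A, I ≠ ⊤ → I.HasISPFactorization

/-- An ISP-domain: an integral domain in which every proper nonzero ideal factors as an
invertible ideal times a nonempty product of proper radical ideals. -/
def IsISPDomain (A : Type*) [CommRing A] : Prop :=
  IsDomain A ∧ ∀ I : Ideal A, I ≠ ⊤ → I ≠ ⊥ → I.HasISPFactorization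

/-- A Marot ring: every regular ideal is generated by the regular elements it contains. -/
def IsMarotRing (A : Type*) [CommRing A] : Prop :=
  ∀ I : Ideal A, I.IsRegularIdeal →
    I = Ideal.span ((I : Set A) ∩ (nonZeroDivisors A : Set A))

/-!
Localizing at a maximal ideal, `I = (x)` with `x` regular, `(x)` is radical, and every ideal
containing `x ^ 2` is a principal ideal times a product of radical ideals. The last property passes
to divisors of `x` and to localizations.

If `(y, m)` is a weakly regular sequence and `y ∣ x`, then `(y) + (m) = (1)`: otherwise, after
localizing at a minimal prime over `(y) + (m)`, the ideals `(y, m ^ 2)` and `(y ^ 2, m)` are powers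
of the maximal ideal `𝔪`, hence comparable, which Nakayama's lemma rules out. When `x` is a nonunit
of a local ring, this makes `x` irreducible.

Suppose that `x` lies in a prime `P` and `m ∉ P` is a nonunit; localize at a minimal prime over
`P + (m)`. Then `P + (m ^ 2)` is a power of `𝔪`, so `𝔪 ⊄ P + 𝔪 ^ 2` by Nakayama's lemma. Choose
`t ∈ 𝔪` outside `P + 𝔪 ^ 2`. For `s ∈ P` the ideal `(x, t + s)` is a product of radical ideals not
contained in `𝔪 ^ 2`, so it is radical. This forces `(x, t)` to be weakly regular, and
`(x) + (t) = (1)` is absurd.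
-/

open IsLocalRing RingTheory.Sequence

lemma radical_sup_span_sq {R : Type*} [CommSemiring R] (D : Ideal R) (z : R) :
    (D ⊔ Ideal.span {z ^ 2}).radical = (D ⊔ Ideal.span {z}).radical := by
  rw [Ideal.radical_sup, ← Ideal.span_singleton_pow, Ideal.radical_pow _ two_ne_zero,
    ← Ideal.radical_sup]

lemma le_sup_pow {R : Type*} [CommSemiring R] {I P : Ideal R} (h : I ≤ P ⊔ I ^ 2) (k : ℕ) :
    I ≤ P ⊔ I ^ k := by
  induction k with
  | zero => simp [Ideal.one_eq_top]
  | succ k ih =>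
    calc I ≤ P ⊔ I * I := by rwa [← sq]
      _ ≤ P ⊔ I * (P ⊔ I ^ k) := sup_le_sup_left (Ideal.mul_mono_right ih) P
      _ = P ⊔ (I * P ⊔ I ^ (k + 1)) := by rw [Ideal.mul_sup, pow_succ']
      _ ≤ P ⊔ I ^ (k + 1) :=
        sup_le le_sup_left (sup_le_sup_right Ideal.mul_le_right _)

section Factorizations

variable {R S : Type*} [CommRing R] [CommRing S] [Algebra R S]

/-- The ideals that are finite products of radical ideals. The factor `⊤` is allowed, so that this
class is stable under localization. -/
def radicalProducts (R : Type*) [CommRing R] : Submonoid (Ideal R) :=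
  Submonoid.closure {H | H.IsRadical}

/-- An ISP-factorization whose invertible factor is principal, as happens in a local ring. -/
def HasPrincipalISPFactorization (K : Ideal R) : Prop :=
  ∃ j : R, ∃ T ∈ radicalProducts R, K = Ideal.span {j} * T

/-- The ISP-condition on the ideals containing `x ^ 2`. For regular `x` it holds in ISP-rings in
which invertible ideals are principal, and unlike the condition on all regular ideals it passes to
localizations and to divisors of `x`. -/
def FactorsAboveSq (x : R) : Prop :=
  ∀ K : Ideal R, x ^ 2 ∈ K → HasPrincipalISPFactorization K

lemma FactorsAboveSq.of_dvd {x y : R} (hx : FactorsAboveSq x) (hyx : y ∣ x) :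
    FactorsAboveSq y :=
  fun K hyK ↦ hx K (K.mem_of_dvd (pow_dvd_pow_of_dvd hyx 2) hyK)

lemma mem_radicalProducts_of_irreducible {x : R} (hF : FactorsAboveSq x)
    (hx : Irreducible x) {K : Ideal R} (hxK : x ∈ K) (hK : ¬ K ≤ Ideal.span {x}) :
    K ∈ radicalProducts R := by
  obtain ⟨j, T, hT, rfl⟩ := hF K (K.pow_mem_of_mem hxK 2 two_pos)
  have hjx : j ∣ x := Ideal.mem_span_singleton.1 (Ideal.mul_le_left hxK)
  rcases hx.dvd_iff.1 hjx with hj | hj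
  · rwa [Ideal.span_singleton_eq_top.2 hj, Ideal.top_mul]
  · exact absurd
      (Ideal.mul_le_left.trans (Ideal.span_singleton_le_span_singleton.2 hj.dvd)) hK

lemma hasPrincipalISPFactorization_top : HasPrincipalISPFactorization (⊤ : Ideal R) :=
  ⟨1, 1, one_mem _, by simp [Ideal.one_eq_top]⟩

lemma isRadical_map_of_isLocalization (N : Submonoid R) [IsLocalization N S] {H : Ideal R}
    (hH : H.IsRadical) : (H.map (algebraMap R S)).IsRadical := by
  rw [← Ideal.radical_eq_iff, ← IsLocalization.map_radical N, hH.radical]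

lemma isRadical_span_algebraMap (N : Submonoid R) [IsLocalization N S] {x : R}
    (hx : (Ideal.span {x}).IsRadical) : (Ideal.span {algebraMap R S x}).IsRadical := by
  rw [← Set.image_singleton, ← Ideal.map_span]
  exact isRadical_map_of_isLocalization N hx

lemma maximalIdeal_le_radical_map_sup_span {D Q : Ideal R} [Q.IsPrime] {m : R}
    (hQ : Q ∈ (D ⊔ Ideal.span {m}).minimalPrimes) :
    maximalIdeal (Localization.AtPrime Q) ≤ (D.map (algebraMap R (Localization.AtPrime Q)) ⊔
      Ideal.span {algebraMap R (Localization.AtPrime Q) m}).radical := by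
  rw [← Localization.AtPrime.map_eq_maximalIdeal, ← Set.image_singleton (a := m), ← Ideal.map_span,
    ← Ideal.map_sup, IsLocalization.AtPrime.radical_map_of_mem_minimalPrimes _ Q _ hQ]

lemma mem_nonZeroDivisors_of_map_eq_span (N : Submonoid R) [IsLocalization N S] {I : Ideal R}
    (hI : I.IsRegularIdeal) {x : S} (hx : I.map (algebraMap R S) = Ideal.span {x}) :
    x ∈ nonZeroDivisors S := by
  obtain ⟨a, haI, ha⟩ := hI
  obtain ⟨c, hc⟩ := Ideal.mem_span_singleton.1 (hx ▸ Ideal.mem_map_of_mem (algebraMap R S) haI)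
  have hac := IsLocalization.map_nonZeroDivisors_le N S (Submonoid.mem_map_of_mem _ ha)
  exact (mul_mem_nonZeroDivisors.1 (hc ▸ hac)).1

lemma map_mem_radicalProducts (N : Submonoid R) [IsLocalization N S] {T : Ideal R}
    (hT : T ∈ radicalProducts R) : T.map (algebraMap R S) ∈ radicalProducts S := by
  suffices radicalProducts R ≤ (radicalProducts S).comap (Ideal.mapHom (algebraMap R S)) from
    this hT
  exact (Submonoid.closure_le).2 fun _ hH ↦
    Submonoid.subset_closure (isRadical_map_of_isLocalization N hH)

lemma hasPrincipalISPFactorization_of_under_eq_mul (N : Submonoid R) [IsLocalization N S]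
    {K : Ideal S} {J T : Ideal R} (hK : K.under R = J * T)
    (hJ : (J.map (algebraMap R S)).IsPrincipal) (hT : T ∈ radicalProducts R) :
    HasPrincipalISPFactorization K := by
  obtain ⟨j, hj⟩ := hJ
  refine ⟨j, _, map_mem_radicalProducts N hT, ?_⟩
  rw [← IsLocalization.map_under N S K, hK, Ideal.map_mul, hj, Ideal.submodule_span_eq]

lemma FactorsAboveSq.map (N : Submonoid R) [IsLocalization N S] {x : R} (hx : FactorsAboveSq x) :
    FactorsAboveSq (algebraMap R S x) := by
  intro K hxK
  obtain ⟨j, T, hT, hK⟩ := hx (K.under R) (by rwa [Ideal.mem_comap, map_pow])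
  exact hasPrincipalISPFactorization_of_under_eq_mul N hK
    (Submodule.IsPrincipal.map_ringHom _ ⟨j, rfl⟩) hT

lemma factorsAboveSq_of_map_eq_span {I M : Ideal R} [hM : M.IsMaximal]
    (hfac : ∀ K : Ideal R, K ≠ ⊤ → I ^ 2 ≤ K → K.HasISPFactorization) {x : Localization.AtPrime M}
    (hx : I.map (algebraMap R (Localization.AtPrime M)) = Ideal.span {x}) :
    FactorsAboveSq x := by
  intro K hxK
  rcases eq_or_ne K ⊤ with rfl | hK
  · exact hasPrincipalISPFactorization_top
  have hIK : I ^ 2 ≤ K.under R := by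
    rw [← Ideal.map_le_iff_le_comap, Ideal.map_pow, hx, Ideal.span_singleton_pow]
    exact (Ideal.span_singleton_le_iff_mem _).2 hxK
  obtain ⟨J, L, hJ, -, hL, hKL⟩ := hfac (K.under R) (Ideal.comap_ne_top _ hK) hIK
  exact hasPrincipalISPFactorization_of_under_eq_mul M.primeCompl hKL (hJ.2.2 M hM)
    (Submonoid.list_prod_mem _ fun H hH ↦ Submonoid.subset_closure (hL H hH).2)

end Factorizations

section RegularPairs

variable {R : Type*} [CommRing R] {y m : R}

lemma isWeaklyRegular_pair_iff :
    IsWeaklyRegular R [y, m] ↔ y ∈ nonZeroDivisors R ∧ ∀ s, y ∣ s * m → y ∣ s := by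
  rw [isWeaklyRegular_cons_iff, isWeaklyRegular_singleton_iff, ← isLeftRegular_iff,
    isLeftRegular_iff_mem_nonZeroDivisorsLeft, nonZeroDivisorsLeft_eq_nonZeroDivisors,
    isSMulRegular_quotient_iff_mem_of_smul_mem]
  simp only [← Submodule.ideal_span_singleton_smul, smul_eq_mul, Ideal.mul_top,
    Ideal.mem_span_singleton, mul_comm m]

lemma isWeaklyRegular_sq_left (h : IsWeaklyRegular R [y, m]) : IsWeaklyRegular R [y ^ 2, m] := by
  obtain ⟨hy, hm⟩ := isWeaklyRegular_pair_iff.1 h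
  refine isWeaklyRegular_pair_iff.2 ⟨pow_mem hy 2, fun s hs ↦ ?_⟩
  obtain ⟨c, rfl⟩ := hm s ((dvd_pow_self y two_ne_zero).trans hs)
  rw [sq, mul_assoc, dvd_cancel_left_mem_nonZeroDivisors hy] at hs
  rw [sq]
  exact mul_dvd_mul_left y (hm c hs)

lemma isWeaklyRegular_sq_right (h : IsWeaklyRegular R [y, m]) : IsWeaklyRegular R [y, m ^ 2] := by
  obtain ⟨hy, hm⟩ := isWeaklyRegular_pair_iff.1 h
  exact isWeaklyRegular_pair_iff.2 ⟨hy, fun s hs ↦ hm s (hm _ (by rwa [mul_assoc, ← sq]))⟩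

lemma isRelPrime_of_isWeaklyRegular (h : IsWeaklyRegular R [y, m]) : IsRelPrime y m := by
  obtain ⟨hy, hm⟩ := isWeaklyRegular_pair_iff.1 h
  rintro j ⟨c, rfl⟩ ⟨d, rfl⟩
  obtain ⟨f, hf⟩ := hm c ⟨d, by ring⟩
  refine .of_mul_eq_one f ((mul_cancel_left_mem_nonZeroDivisors hy).1 ?_)
  linear_combination -j * hf

lemma isWeaklyRegular_of_isRadical_span_mul {j : R} (hjy : j * y ∈ nonZeroDivisors R)
    (hrad : (Ideal.span {j * y}).IsRadical) : IsWeaklyRegular R [y, j] := by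
  obtain ⟨hj, hy⟩ := mul_mem_nonZeroDivisors.1 hjy
  refine isWeaklyRegular_pair_iff.2 ⟨hy, fun s ⟨c, hc⟩ ↦ ?_⟩
  have hjs : j * s ∈ Ideal.span {j * y} :=
    hrad ⟨2, Ideal.mem_span_singleton.2 ⟨c * s, by linear_combination j * s * hc⟩⟩
  rwa [Ideal.mem_span_singleton, dvd_cancel_left_mem_nonZeroDivisors hj] at hjs

end RegularPairs

section LocalRing

variable {B : Type*} [CommRing B] [IsLocalRing B]

lemma mem_of_mem_sup_span_sq {D : Ideal B} {z : B} (hz : z ∈ maximalIdeal B)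
    (h : z ∈ D ⊔ Ideal.span {z ^ 2}) : z ∈ D := by
  rw [sup_comm, Ideal.mem_span_singleton_sup] at h
  obtain ⟨c, d, hd, hsum⟩ := h
  have hunit : IsUnit (1 - c * z) :=
    isUnit_one_sub_self_of_mem_nonunits _ (Ideal.mul_mem_left _ c hz)
  rw [← Ideal.unit_mul_mem_iff_mem D hunit]
  convert hd using 1
  linear_combination -hsum

lemma exists_eq_maximalIdeal_pow_of_mem_radicalProducts {K : Ideal B}
    (hK : K ∈ radicalProducts B) (hrad : maximalIdeal B ≤ K.radical) :
    ∃ k : ℕ, K = maximalIdeal B ^ k := by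
  induction hK using Submonoid.closure_induction with
  | mem H hH =>
    rw [hH.radical] at hrad
    rcases eq_or_ne H ⊤ with rfl | hne
    · exact ⟨0, by simp [Ideal.one_eq_top]⟩
    · exact ⟨1, by rw [pow_one]; exact (le_maximalIdeal hne).antisymm hrad⟩
  | one => exact ⟨0, (pow_zero _).symm⟩
  | mul K₁ K₂ _ _ ih₁ ih₂ =>
    rw [Ideal.radical_mul] at hrad
    obtain ⟨k₁, rfl⟩ := ih₁ (hrad.trans inf_le_left)
    obtain ⟨k₂, rfl⟩ := ih₂ (hrad.trans inf_le_right)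
    exact ⟨k₁ + k₂, (pow_add _ _ _).symm⟩

lemma isRadical_of_mem_radicalProducts {K : Ideal B} (hK : K ∈ radicalProducts B)
    (hsq : ¬ K ≤ maximalIdeal B ^ 2) : K.IsRadical := by
  induction hK using Submonoid.closure_induction with
  | mem H hH => exact hH
  | one => simp [Ideal.one_eq_top, Ideal.IsRadical]
  | mul K₁ K₂ _ _ ih₁ ih₂ =>
    rcases eq_or_ne K₁ ⊤ with rfl | h₁
    · rw [Ideal.top_mul] at hsq ⊢
      exact ih₂ hsq
    rcases eq_or_ne K₂ ⊤ with rfl | h₂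
    · rw [Ideal.mul_top] at hsq ⊢
      exact ih₁ hsq
    rw [sq] at hsq
    exact absurd (Ideal.mul_mono (le_maximalIdeal h₁) (le_maximalIdeal h₂)) hsq

lemma mem_of_isRadical_sup_span_add {D : Ideal B} {s t : B} (hD : D.IsRadical)
    (hrad : (D ⊔ Ideal.span {t + s}).IsRadical) (hst : s * t ∈ D) (ht : t ∉ D) : s ∈ D := by
  have htmem : t ∈ Ideal.span {t + s} ⊔ D := by
    rw [sup_comm]
    refine hrad ⟨2, ?_⟩
    rw [show t ^ 2 = -(s * t) + t * (t + s) by ring]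
    exact add_mem (Ideal.mem_sup_left (neg_mem hst))
      (Ideal.mem_sup_right (Ideal.mul_mem_left _ t (Ideal.mem_span_singleton_self _)))
  obtain ⟨b, d, hd, hsum⟩ := Ideal.mem_span_singleton_sup.1 htmem
  have hbt : (1 - b) * t ∈ D := by
    refine hD ⟨2, ?_⟩
    rw [show ((1 - b) * t) ^ 2 = (1 - b) * b * (s * t) + (1 - b) * t * d by
      linear_combination -(1 - b) * t * hsum]
    exact add_mem (D.mul_mem_left _ hst) (D.mul_mem_left _ hd)
  have hbs : b * s ∈ D := by
    rw [show b * s = (1 - b) * t - d by linear_combination hsum]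
    exact sub_mem hbt hd
  rcases isUnit_or_isUnit_one_sub_self b with hb | hb
  · exact (Ideal.unit_mul_mem_iff_mem D hb).1 hbs
  · exact absurd ((Ideal.unit_mul_mem_iff_mem D hb).1 hbt) ht

end LocalRing

section Comaximal

variable {R B : Type*} [CommRing R] [CommRing B] [IsLocalRing B]

lemma exists_span_sup_span_eq_maximalIdeal_pow {a b : B} (hab : IsRelPrime a b)
    (hfac : HasPrincipalISPFactorization (Ideal.span {a} ⊔ Ideal.span {b}))
    (hrad : maximalIdeal B ≤ (Ideal.span {a} ⊔ Ideal.span {b}).radical) :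
    ∃ k : ℕ, Ideal.span {a} ⊔ Ideal.span {b} = maximalIdeal B ^ k := by
  obtain ⟨j, T, hT, hjT⟩ := hfac
  have hle : Ideal.span {a} ⊔ Ideal.span {b} ≤ Ideal.span {j} := hjT ▸ Ideal.mul_le_left
  rw [sup_le_iff, Ideal.span_singleton_le_span_singleton,
    Ideal.span_singleton_le_span_singleton] at hle
  rw [Ideal.span_singleton_eq_top.2 (hab hle.1 hle.2), Ideal.top_mul] at hjT
  rw [hjT] at hrad ⊢
  exact exists_eq_maximalIdeal_pow_of_mem_radicalProducts hT hrad

lemma isUnit_of_isWeaklyRegular_of_maximalIdeal_le_radical {y m : B} (hF : FactorsAboveSq y)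
    (hreg : IsWeaklyRegular B [y, m]) (hy : y ∈ maximalIdeal B)
    (hrad : maximalIdeal B ≤ (Ideal.span {y} ⊔ Ideal.span {m}).radical) : IsUnit m := by
  by_contra hm
  have hcop := isRelPrime_of_isWeaklyRegular hreg
  obtain ⟨k, hk⟩ := exists_span_sup_span_eq_maximalIdeal_pow
    (isRelPrime_of_isWeaklyRegular (isWeaklyRegular_sq_right hreg))
    (hF _ (Ideal.mem_sup_left (Ideal.mem_span_singleton.2 (dvd_pow_self y two_ne_zero))))
    (by rwa [radical_sup_span_sq])
  obtain ⟨l, hl⟩ := exists_span_sup_span_eq_maximalIdeal_pow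
    (isRelPrime_of_isWeaklyRegular (isWeaklyRegular_sq_left hreg))
    (hF _ (Ideal.mem_sup_left (Ideal.mem_span_singleton_self _)))
    (by rwa [sup_comm, radical_sup_span_sq, sup_comm])
  -- The ideals `(y, m ^ 2)` and `(y ^ 2, m)` are comparable, being powers of the maximal ideal.
  rcases le_total k l with hkl | hlk
  · have hle := (hl.trans_le (Ideal.pow_le_pow_right hkl)).trans_eq hk.symm
    have hym : y ∣ m := Ideal.mem_span_singleton.1 <| mem_of_mem_sup_span_sq hm
      (hle (Ideal.mem_sup_right (Ideal.mem_span_singleton_self m)))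
    exact hy (hcop dvd_rfl hym)
  · have hle := (hk.trans_le (Ideal.pow_le_pow_right hlk)).trans_eq hl.symm
    rw [sup_comm (Ideal.span {y ^ 2})] at hle
    have hmy : m ∣ y := Ideal.mem_span_singleton.1 <| mem_of_mem_sup_span_sq hy
      (hle (Ideal.mem_sup_left (Ideal.mem_span_singleton_self y)))
    exact hm (hcop hmy dvd_rfl)

lemma span_sup_span_eq_top_of_isWeaklyRegular {y m : R} (hF : FactorsAboveSq y)
    (hreg : IsWeaklyRegular R [y, m]) : Ideal.span {y} ⊔ Ideal.span {m} = ⊤ := by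
  by_contra hne
  obtain ⟨M, hM, hle⟩ := Ideal.exists_le_maximal _ hne
  obtain ⟨Q, hQ, -⟩ := Ideal.exists_minimalPrimes_le hle
  have hQprime : Q.IsPrime := hQ.1.1
  have hyQ : y ∈ Q := hQ.1.2 (Ideal.mem_sup_left (Ideal.mem_span_singleton_self y))
  have hmQ : m ∈ Q := hQ.1.2 (Ideal.mem_sup_right (Ideal.mem_span_singleton_self m))
  have hrad := maximalIdeal_le_radical_map_sup_span hQ
  rw [Ideal.map_span, Set.image_singleton] at hrad
  have hunit := isUnit_of_isWeaklyRegular_of_maximalIdeal_le_radical (hF.map Q.primeCompl)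
    (hreg.of_isLocalization (Localization.AtPrime Q) Q.primeCompl)
    ((IsLocalization.AtPrime.to_map_mem_maximal_iff _ Q y).2 hyQ) hrad
  exact (IsLocalization.AtPrime.isUnit_to_map_iff _ Q m).1 hunit hmQ

lemma isUnit_or_isUnit_of_isWeaklyRegular {y m : B} (hF : FactorsAboveSq y)
    (hreg : IsWeaklyRegular B [y, m]) : IsUnit y ∨ IsUnit m := by
  by_contra! h
  refine Ideal.IsPrime.ne_top inferInstance (top_le_iff.1 ?_ : maximalIdeal B = ⊤)
  rw [← span_sup_span_eq_top_of_isWeaklyRegular hF hreg, sup_le_iff,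
    Ideal.span_singleton_le_iff_mem, Ideal.span_singleton_le_iff_mem]
  exact h

lemma irreducible_of_isRadical_span {x : B} (hF : FactorsAboveSq x) (hx : x ∈ nonZeroDivisors B)
    (hrad : (Ideal.span {x}).IsRadical) (hunit : ¬ IsUnit x) : Irreducible x := by
  refine ⟨hunit, ?_⟩
  rintro j y rfl
  exact (isUnit_or_isUnit_of_isWeaklyRegular (hF.of_dvd (dvd_mul_left y j))
    (isWeaklyRegular_of_isRadical_span_mul hx hrad)).symm

end Comaximal

section PrimeContaining

variable {B : Type*} [CommRing B] [IsLocalRing B] {x : B} {P : Ideal B} [hP : P.IsPrime]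

lemma not_maximalIdeal_le_sup_sq (hF : FactorsAboveSq x) (hx : Irreducible x) (hxP : x ∈ P)
    {m : B} (hm : m ∈ maximalIdeal B) (hmP : m ∉ P)
    (hrad : maximalIdeal B ≤ (P ⊔ Ideal.span {m}).radical) :
    ¬ maximalIdeal B ≤ P ⊔ maximalIdeal B ^ 2 := by
  intro hle
  have hne : ¬ P ⊔ Ideal.span {m ^ 2} ≤ Ideal.span {x} := by
    rw [← Ideal.span_singleton_le_iff_mem] at hxP
    exact fun h ↦ hmP (hP.mem_of_pow_mem 2
      (hxP (h (Ideal.mem_sup_right (Ideal.mem_span_singleton_self _)))))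
  obtain ⟨k, hk⟩ := exists_eq_maximalIdeal_pow_of_mem_radicalProducts
    (mem_radicalProducts_of_irreducible hF hx (Ideal.mem_sup_left hxP) hne)
    (by rwa [radical_sup_span_sq])
  have hmk : m ∈ P ⊔ Ideal.span {m ^ 2} := by
    rw [← sup_idem P, sup_assoc, hk]
    exact le_sup_pow hle k hm
  exact hmP (mem_of_mem_sup_span_sq hm hmk)

lemma isWeaklyRegular_of_notMem_sup_sq (hF : FactorsAboveSq x) (hx : Irreducible x)
    (hreg : x ∈ nonZeroDivisors B) (hrad : (Ideal.span {x}).IsRadical) (hxP : x ∈ P) {t : B}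
    (ht : t ∉ P ⊔ maximalIdeal B ^ 2) : IsWeaklyRegular B [x, t] := by
  have htP : t ∉ P := fun h ↦ ht (Ideal.mem_sup_left h)
  have hxP' : Ideal.span {x} ≤ P := (Ideal.span_singleton_le_iff_mem P).2 hxP
  refine isWeaklyRegular_pair_iff.2 ⟨hreg, fun s hs ↦ ?_⟩
  rw [← Ideal.mem_span_singleton] at hs ⊢
  have hsP : s ∈ P := (hP.mem_or_mem (hxP' hs)).resolve_right htP
  have hts : t + s ∉ P ⊔ maximalIdeal B ^ 2 := by
    rwa [Ideal.add_mem_iff_left _ (Ideal.mem_sup_left hsP)]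
  have htsK : t + s ∈ Ideal.span {x} ⊔ Ideal.span {t + s} :=
    Ideal.mem_sup_right (Ideal.mem_span_singleton_self _)
  have hK : (Ideal.span {x} ⊔ Ideal.span {t + s}).IsRadical :=
    isRadical_of_mem_radicalProducts
      (mem_radicalProducts_of_irreducible hF hx
        (Ideal.mem_sup_left (Ideal.mem_span_singleton_self x))
        fun h ↦ hts (Ideal.mem_sup_left (hxP' (h htsK))))
      fun h ↦ hts (Ideal.mem_sup_right (h htsK))
  exact mem_of_isRadical_sup_span_add hrad hK hs fun h ↦ htP (hxP' h)

lemma mem_of_maximalIdeal_le_radical_sup_span (hF : FactorsAboveSq x)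
    (hreg : x ∈ nonZeroDivisors B) (hrad : (Ideal.span {x}).IsRadical) (hxP : x ∈ P) {m : B}
    (hm : m ∈ maximalIdeal B) (hmP : maximalIdeal B ≤ (P ⊔ Ideal.span {m}).radical) : m ∈ P := by
  have hunit : ¬ IsUnit x := fun h ↦ hP.ne_top (P.eq_top_of_isUnit_mem hxP h)
  have hx := irreducible_of_isRadical_span hF hreg hrad hunit
  by_contra hm'
  obtain ⟨t, ht, htP⟩ := SetLike.not_le_iff_exists.1
    (not_maximalIdeal_le_sup_sq hF hx hxP hm hm' hmP)
  exact (isUnit_or_isUnit_of_isWeaklyRegular hF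
    (isWeaklyRegular_of_notMem_sup_sq hF hx hreg hrad hxP htP)).elim hunit ht

end PrimeContaining

lemma isMaximal_of_mem_of_factorsAboveSq {R : Type*} [CommRing R] {x : R} (hF : FactorsAboveSq x)
    (hreg : x ∈ nonZeroDivisors R) (hrad : (Ideal.span {x}).IsRadical) {P : Ideal R}
    [hP : P.IsPrime] (hxP : x ∈ P) : P.IsMaximal := by
  obtain ⟨M, hM, hPM⟩ := P.exists_le_maximal hP.ne_top
  suffices hMP : M ≤ P by rwa [hPM.antisymm hMP]
  intro m hmM
  obtain ⟨Q, hQ, -⟩ := Ideal.exists_minimalPrimes_le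
    (sup_le hPM ((Ideal.span_singleton_le_iff_mem M).2 hmM))
  have hQprime : Q.IsPrime := hQ.1.1
  have hPQ : P ≤ Q := le_sup_left.trans hQ.1.2
  have hmQ : m ∈ Q := hQ.1.2 (Ideal.mem_sup_right (Ideal.mem_span_singleton_self m))
  have := Ideal.isPrime_map_of_isLocalizationAtPrime Q (S := Localization.AtPrime Q) hPQ
  have hmap := mem_of_maximalIdeal_le_radical_sup_span (hF.map Q.primeCompl)
    (IsLocalization.map_nonZeroDivisors_le Q.primeCompl (Localization.AtPrime Q)
      (Submonoid.mem_map_of_mem _ hreg))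
    (isRadical_span_algebraMap Q.primeCompl hrad) (Ideal.mem_map_of_mem _ hxP)
    ((IsLocalization.AtPrime.to_map_mem_maximal_iff _ Q m).2 hmQ)
    (maximalIdeal_le_radical_map_sup_span hQ)
  rwa [← Ideal.mem_comap, ← Ideal.under_def, Ideal.under_map_of_isLocalizationAtPrime Q hPQ]
    at hmap

theorem invertible_radical_zero_dimensional_of_marot_isISPRing_general {A : Type*} [CommRing A]
    {I : Ideal A} (hfac : ∀ K : Ideal A, K ≠ ⊤ → I ^ 2 ≤ K → K.HasISPFactorization)
    (hreg : I.IsRegularIdeal)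
    (hloc : ∀ (M : Ideal A) [M.IsMaximal],
      (I.map (algebraMap A (Localization.AtPrime M))).IsPrincipal)
    (hrad : I.IsRadical) :
    ∀ P : Ideal A, P.IsPrime → I ≤ P → P.IsMaximal := by
  intro P hP hIP
  obtain ⟨M, hM, hPM⟩ := P.exists_le_maximal hP.ne_top
  let S := Localization.AtPrime M
  obtain ⟨x, hx⟩ : (I.map (algebraMap A S)).IsPrincipal := hloc M
  rw [Ideal.submodule_span_eq] at hx
  have hregx := mem_nonZeroDivisors_of_map_eq_span M.primeCompl hreg hx
  have hradx : (Ideal.span {x}).IsRadical := hx ▸ isRadical_map_of_isLocalization M.primeCompl hrad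
  have hxP : x ∈ P.map (algebraMap A S) :=
    Ideal.map_mono hIP (hx ▸ Ideal.mem_span_singleton_self x)
  have := Ideal.isPrime_map_of_isLocalizationAtPrime M (S := S) hPM
  have hmax : (P.map (algebraMap A S)).IsMaximal :=
    isMaximal_of_mem_of_factorsAboveSq (factorsAboveSq_of_map_eq_span hfac hx) hregx hradx hxP
  have hPM' : M = P := by
    rw [← Ideal.under_map_of_isLocalizationAtPrime M (S := S) hPM,
      Localization.AtPrime.eq_maximalIdeal_iff_under_eq.2 (eq_maximalIdeal hmax)]
  rwa [← hPM']

/-- Any proper invertible radical ideal of a Marot ISP-ring is zero-dimensional: every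
prime ideal containing it is maximal. -/
theorem invertible_radical_zero_dimensional_of_marot_isISPRing {A : Type*} [CommRing A]
    (hmarot : IsMarotRing A) (hisp : IsISPRing A)
    (I : Ideal A) (hI : I ≠ ⊤) (hinv : I.IsInvertibleIdeal) (hrad : I.IsRadical) :
    ∀ P : Ideal A, P.IsPrime → I ≤ P → P.IsMaximal := by
  obtain ⟨a, haI, ha⟩ := hinv.1
  exact invertible_radical_zero_dimensional_of_marot_isISPRing_general
    (fun K hK hIK ↦ hisp K hK ⟨a ^ 2, hIK (Ideal.pow_mem_pow haI 2), pow_mem ha 2⟩)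
    hinv.1 (fun M hM ↦ hinv.2.2 M hM) hrad
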